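/- Let p > 3 be a prime. Then ∑_{k=1}^{(p-1)/2} (p/2 - k)·H_k/((p+1-2k)(p+2k)) ≡ 2·q_p(2) - q_p(2)^2 - 6p·q_p(2) + 2p·q_p(2)^2 + p·q_p(2)^3 + (7/12)·p·B_{p-3} modulo p^2 (as rational numbers). -/

import Mathlib

/-- Two rationals `a` and `b` are congruent modulo `p^r`:
the `p`-adic valuation of `a - b` is at least `r`, i.e. `a - b = c * p^r`
with the denominator of `c` not divisible by `p`. -/
def ratCongr (p r : ℕ) (a b : ℚ) : Prop :=
  ∃ c : ℚ, a - b = c * (p : ℚ) ^ r ∧ ¬ (p ∣ c.den)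

/-- The Fermat quotient `q_p(2) = (2^(p-1) - 1)/p` (an integer for odd primes),
viewed as a rational number. -/
def fermatQ (p : ℕ) : ℚ := ((2 : ℚ) ^ (p - 1) - 1) / p

open Finset

/-- The subring of rational numbers whose denominator is not divisible by `p`. -/
def pIntegers (p : ℕ) [Fact p.Prime] : Subring ℚ := (Rat.padicValuation p).integer

section Integrality

variable {p : ℕ} [Fact p.Prime]

lemma mem_pIntegers_iff {x : ℚ} : x ∈ pIntegers p ↔ ¬ p ∣ x.den :=
  Rat.padicValuation_le_one_iff

@[norm_cast, simp]
lemma pIntegers_coe_ofNat (k : ℕ) [k.AtLeastTwo] :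
    ((ofNat(k) : pIntegers p) : ℚ) = ofNat(k) := rfl

lemma inv_natCast_mem_pIntegers {k : ℕ} (hk : ¬ p ∣ k) : (k : ℚ)⁻¹ ∈ pIntegers p := by
  have h0 : k ≠ 0 := by rintro rfl; simp at hk
  rw [mem_pIntegers_iff, Rat.inv_natCast_den, if_neg h0]
  exact hk

lemma inv_natCast_mem_pIntegers_of_lt {k : ℕ} (h0 : 0 < k) (hk : k < p) :
    (k : ℚ)⁻¹ ∈ pIntegers p :=
  inv_natCast_mem_pIntegers fun h => absurd (Nat.le_of_dvd h0 h) (by omega)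

lemma ratCongr_iff {r : ℕ} {a b : ℚ} :
    ratCongr p r a b ↔ ∃ c : pIntegers p, a - b = c * (p : ℚ) ^ r := by
  constructor
  · rintro ⟨c, h, hc⟩
    exact ⟨⟨c, mem_pIntegers_iff.2 hc⟩, h⟩
  · rintro ⟨c, h⟩
    exact ⟨c, h, mem_pIntegers_iff.1 c.2⟩

lemma ratCongr_sum {ι : Type*} {s : Finset ι} {r : ℕ} {f g : ι → ℚ}
    (h : ∀ i ∈ s, ratCongr p r (f i) (g i)) : ratCongr p r (∑ i ∈ s, f i) (∑ i ∈ s, g i) := by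
  simp only [ratCongr_iff] at h ⊢
  choose! c hc using h
  refine ⟨∑ i ∈ s, c i, ?_⟩
  rw [← sum_sub_distrib, sum_congr rfl hc, ← sum_mul]
  push_cast
  rfl

lemma bernoulli'_mem_pIntegers {n : ℕ} (hn : n + 1 < p) : bernoulli' n ∈ pIntegers p := by
  induction n using Nat.strong_induction_on with
  | _ n ih =>
    rw [bernoulli'_def]
    refine sub_mem (one_mem _) (sum_mem fun k hk => ?_)
    have hk := mem_range.1 hk
    rw [div_eq_mul_inv]
    refine mul_mem (mul_mem (natCast_mem _ _) ?_) (ih k hk (by omega))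
    have h := inv_natCast_mem_pIntegers_of_lt (p := p) (k := n - k + 1) (by omega) (by omega)
    rwa [Nat.cast_add, Nat.cast_sub hk.le, Nat.cast_one] at h

lemma bernoulli_mem_pIntegers {n : ℕ} (hn : n + 1 < p) : bernoulli n ∈ pIntegers p :=
  mul_mem (pow_mem (neg_mem (one_mem _)) _) (bernoulli'_mem_pIntegers hn)

/-- The power sum `∑_{k<p} k^m` is congruent to `p B_m` modulo `p²` for `m + 2 ≤ p`. -/
lemma sum_range_pow_congr {m : ℕ} (hm : m + 1 < p) :
    ratCongr p 2 (∑ k ∈ range p, (k : ℚ) ^ m) (p * bernoulli m) := by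
  have hinv := inv_natCast_mem_pIntegers_of_lt (p := p) (Nat.succ_pos m) hm
  have h0 : ((m : ℚ) + 1) ≠ 0 := by positivity
  have hlast : (p : ℚ) * bernoulli m =
      bernoulli m * ((m + 1).choose m) * (p : ℚ) ^ (m + 1 - m) / (m + 1) := by
    rw [Nat.choose_succ_self_right, Nat.add_sub_cancel_left]
    push_cast
    field_simp
  have hlow : ratCongr p 2 (∑ i ∈ range m,
      bernoulli i * ((m + 1).choose i) * (p : ℚ) ^ (m + 1 - i) / (m + 1)) (∑ i ∈ range m, 0) := by
    refine ratCongr_sum fun i hi => ratCongr_iff.2 ?_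
    have hi := mem_range.1 hi
    refine ⟨⟨bernoulli i, bernoulli_mem_pIntegers (by omega)⟩ * ((m + 1).choose i) *
      p ^ (m - 1 - i) * ⟨_, hinv⟩, ?_⟩
    rw [show m + 1 - i = (m - 1 - i) + 2 by omega, pow_add]
    push_cast
    ring
  obtain ⟨c, hc⟩ := ratCongr_iff.1 hlow
  refine ratCongr_iff.2 ⟨c, ?_⟩
  rw [sum_range_pow, sum_range_succ, ← hlast, ← hc]
  simp

/-- The Fermat quotient of a natural number coprime to `p`. -/
lemma exists_pow_sub_one_eq {a : ℕ} (ha : ¬ p ∣ a) :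
    ∃ t : pIntegers p, (a : ℚ) ^ (p - 1) = 1 + p * t := by
  have hp : p.Prime := Fact.out
  have hc : IsCoprime (a : ℤ) p :=
    Nat.isCoprime_iff_coprime.2 ((hp.coprime_iff_not_dvd.2 ha).symm)
  obtain ⟨t, ht⟩ := (Int.ModEq.pow_card_sub_one_eq_one hp hc).symm.dvd
  refine ⟨t, ?_⟩
  have : ((a : ℤ) : ℚ) ^ (p - 1) - 1 = p * t := by exact_mod_cast ht
  push_cast at this ⊢
  linarith

end Integrality

section Splitting

lemma sum_range_two_mul_reflect (g : ℕ → ℚ) (n : ℕ) :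
    ∑ k ∈ range (2 * n), g (k + 1) =
      ∑ j ∈ range n, (g (j + 1) + g (2 * n + 1 - (j + 1))) := by
  rw [two_mul, sum_range_add, sum_add_distrib, ← sum_range_reflect (fun j => g (n + j + 1))]
  congr 1
  refine sum_congr rfl fun j hj => ?_
  have := mem_range.1 hj
  congr 1
  omega

lemma sum_range_two_mul_parity (g : ℕ → ℚ) (n : ℕ) :
    ∑ k ∈ range (2 * n), g (k + 1) =
      ∑ j ∈ range n, (g (2 * (j + 1)) + g (2 * n + 1 - 2 * (j + 1))) := by
  have h : ∑ k ∈ range (2 * n), g (k + 1) =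
      ∑ j ∈ range n, g (2 * (j + 1)) + ∑ j ∈ range n, g (2 * j + 1) := by
    induction n with
    | zero => simp
    | succ n ih =>
      rw [mul_add, mul_one, sum_range_succ, sum_range_succ, ih, sum_range_succ, sum_range_succ]
      ring_nf
  rw [h, sum_add_distrib, ← sum_range_reflect (fun j => g (2 * j + 1))]
  congr 1
  refine sum_congr rfl fun j hj => ?_
  have := mem_range.1 hj
  congr 1
  omega

/-- Two evaluations modulo `p²` of the full sum `∑_{0<k<p} g k`, when `g` is even up to a first
order correction `d` and both are homogeneous under doubling. -/
lemma sum_congr_half {p n : ℕ} [Fact p.Prime] (hpn : p = 2 * n + 1) {g d : ℕ → ℚ} {u v : ℚ}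
    (hg : ∀ a, 0 < a → a < p → ratCongr p 2 (g (p - a)) (g a + p * d a))
    (hu : ∀ a, g (2 * a) = u * g a) (hv : ∀ a, d (2 * a) = v * d a) :
    ratCongr p 2 (∑ k ∈ range (2 * n), g (k + 1))
        (2 * ∑ j ∈ range n, g (j + 1) + p * ∑ j ∈ range n, d (j + 1)) ∧
      ratCongr p 2 (∑ k ∈ range (2 * n), g (k + 1))
        (2 * u * ∑ j ∈ range n, g (j + 1) + p * v * ∑ j ∈ range n, d (j + 1)) := by
  constructor
  · rw [sum_range_two_mul_reflect, mul_sum, mul_sum, ← sum_add_distrib]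
    refine ratCongr_sum fun j hj => ?_
    have := mem_range.1 hj
    obtain ⟨c, hc⟩ := ratCongr_iff.1 (hg (j + 1) (by omega) (by omega))
    refine ratCongr_iff.2 ⟨c, ?_⟩
    rw [← hpn]
    linear_combination hc
  · rw [sum_range_two_mul_parity, mul_sum, mul_sum, ← sum_add_distrib]
    refine ratCongr_sum fun j hj => ?_
    have := mem_range.1 hj
    obtain ⟨c, hc⟩ := ratCongr_iff.1 (hg (2 * (j + 1)) (by omega) (by omega))
    refine ratCongr_iff.2 ⟨c, ?_⟩
    rw [← hpn]
    linear_combination hc + 2 * hu (j + 1) + p * hv (j + 1)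

end Splitting

/-- The generalized harmonic number `∑_{j=1}^n 1/j^s`. -/
def harmonicPow (s n : ℕ) : ℚ := ∑ j ∈ range n, ((j + 1 : ℕ) : ℚ)⁻¹ ^ s

section HarmonicCongruences

variable {p n : ℕ} [Fact p.Prime]

lemma harmonicPow_mem_pIntegers (s : ℕ) (hn : n < p) : harmonicPow s n ∈ pIntegers p :=
  sum_mem fun j hj => pow_mem (inv_natCast_mem_pIntegers_of_lt j.succ_pos
    (by have := mem_range.1 hj; omega)) s

lemma harmonic_mem_pIntegers (hn : n < p) : harmonic n ∈ pIntegers p :=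
  sum_mem fun j hj => inv_natCast_mem_pIntegers_of_lt j.succ_pos
    (by have := mem_range.1 hj; omega)

lemma pow_sub_congr {m a : ℕ} (hm : Even m) (hm0 : 0 < m) (ha : a < p) :
    ratCongr p 2 (((p - a : ℕ) : ℚ) ^ m) ((a : ℚ) ^ m + p * (-(m * (a : ℚ) ^ (m - 1)))) := by
  obtain ⟨k, hk⟩ := Polynomial.powAddExpansion (-(a : ℤ)) (p : ℤ) m
  have hodd : Odd (m - 1) := Nat.Even.sub_odd hm0 hm odd_one
  rw [hm.neg_pow, hodd.neg_pow] at hk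
  have hk' : (-(a : ℚ) + p) ^ m = a ^ m + m * -a ^ (m - 1) * p + k * p ^ 2 := by
    exact_mod_cast hk
  refine ratCongr_iff.2 ⟨k, ?_⟩
  rw [Nat.cast_sub ha.le]
  push_cast
  rw [show (p : ℚ) - a = -a + p by ring, hk']
  ring

lemma inv_sq_sub_congr {a : ℕ} (ha0 : 0 < a) (ha : a < p) :
    ratCongr p 2 (((p - a : ℕ) : ℚ)⁻¹ ^ 2)
      ((a : ℚ)⁻¹ ^ 2 + p * (2 * (a : ℚ)⁻¹ ^ 3)) := by
  have hx := inv_natCast_mem_pIntegers_of_lt ha0 ha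
  have hy := inv_natCast_mem_pIntegers_of_lt (p := p) (k := p - a) (by omega) (by omega)
  have hxa : (a : ℚ)⁻¹ * a = 1 := inv_mul_cancel₀ (by positivity)
  have hyb : ((p - a : ℕ) : ℚ)⁻¹ * (p - a) = 1 := by
    rw [← Nat.cast_sub ha.le]
    exact inv_mul_cancel₀ (Nat.cast_ne_zero.2 (by omega))
  generalize (a : ℚ)⁻¹ = x at *
  generalize ((p - a : ℕ) : ℚ)⁻¹ = y at *
  lift x to pIntegers p using hx
  lift y to pIntegers p using hy
  refine ratCongr_iff.2 ⟨x ^ 4 - 2 * (x + p * x ^ 2) * x ^ 2 * y + p ^ 2 * x ^ 4 * y ^ 2, ?_⟩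
  have h1 : (y : ℚ) = -x + p * x * y := by linear_combination (-(y : ℚ)) * hxa - x * hyb
  have h2 : (y : ℚ) = -x - p * x ^ 2 + p ^ 2 * x ^ 2 * y := by
    linear_combination (1 + p * (x : ℚ)) * h1
  push_cast
  linear_combination ((y : ℚ) + (-x - p * x ^ 2 + p ^ 2 * x ^ 2 * y)) * h2

lemma sum_pow_congr_harmonicPow_three (hpn : p = 2 * n + 1) (hp3 : 3 < p) :
    ratCongr p 1 (∑ j ∈ range n, ((j + 1 : ℕ) : ℚ) ^ (p - 4)) (harmonicPow 3 n) := by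
  refine ratCongr_sum fun j hj => ratCongr_iff.2 ?_
  have hj := mem_range.1 hj
  have hx := inv_natCast_mem_pIntegers_of_lt (p := p) j.succ_pos (by omega)
  obtain ⟨t, ht⟩ := exists_pow_sub_one_eq (p := p) (a := j + 1)
    fun h => absurd (Nat.le_of_dvd j.succ_pos h) (by omega)
  refine ⟨⟨_, hx⟩ ^ 3 * t, ?_⟩
  have h0 : ((j + 1 : ℕ) : ℚ) ≠ 0 := by positivity
  rw [show p - 1 = p - 4 + 3 by omega, pow_add] at ht
  push_cast at ht h0 ⊢
  field_simp
  linear_combination ht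

lemma exists_fermatQ (hp2 : p ≠ 2) : ∃ q : pIntegers p, fermatQ p = q := by
  have hp : p.Prime := Fact.out
  obtain ⟨t, ht⟩ := exists_pow_sub_one_eq (p := p) (a := 2)
    fun h => hp2 ((Nat.prime_dvd_prime_iff_eq hp Nat.prime_two).1 h)
  refine ⟨t, ?_⟩
  have h0 : (p : ℚ) ≠ 0 := Nat.cast_ne_zero.2 hp.ne_zero
  rw [fermatQ, div_eq_iff h0]
  push_cast at ht
  linear_combination ht

lemma two_pow_eq_fermatQ : (2 : ℚ) ^ (p - 1) = 1 + p * fermatQ p := by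
  have h0 : (p : ℚ) ≠ 0 := Nat.cast_ne_zero.2 (Fact.out : p.Prime).ne_zero
  rw [fermatQ]
  field_simp
  ring

/-- `H^{(3)}_{(p-1)/2} ≡ -2 B_{p-3}` modulo `p`. -/
lemma harmonicPow_three_congr (hpn : p = 2 * n + 1) (hp3 : 3 < p) :
    ratCongr p 1 (harmonicPow 3 n) (-2 * bernoulli (p - 3)) := by
  have h0 : (p : ℚ) ≠ 0 := by positivity
  have heven : Even (p - 3) := ⟨n - 1, by omega⟩
  have hsum : ∑ k ∈ range p, (k : ℚ) ^ (p - 3) =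
      ∑ k ∈ range (2 * n), ((k + 1 : ℕ) : ℚ) ^ (p - 3) := by
    conv_lhs => rw [hpn, sum_range_succ']
    rw [← hpn, Nat.cast_zero, zero_pow (by omega), add_zero]
  obtain ⟨e, he⟩ := ratCongr_iff.1 (sum_range_pow_congr (p := p) (m := p - 3) (by omega))
  rw [hsum] at he
  obtain ⟨hc, hd⟩ := sum_congr_half hpn (g := fun a => (a : ℚ) ^ (p - 3))
    (d := fun a => -((p - 3 : ℕ) * (a : ℚ) ^ (p - 3 - 1)))
    (u := 2 ^ (p - 3)) (v := 2 ^ (p - 4))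
    (fun a _ ha => pow_sub_congr heven (by omega) ha)
    (fun a => by push_cast; rw [mul_pow])
    (fun a => by push_cast; rw [mul_pow, show p - 3 - 1 = p - 4 by omega]; ring)
  obtain ⟨c, hc⟩ := ratCongr_iff.1 hc
  obtain ⟨d, hd⟩ := ratCongr_iff.1 hd
  obtain ⟨f, hf⟩ := ratCongr_iff.1 (sum_pow_congr_harmonicPow_three hpn hp3)
  obtain ⟨q, hq⟩ := exists_fermatQ (p := p) (by omega)
  have hw := two_pow_eq_fermatQ (p := p)
  have hT := harmonicPow_mem_pIntegers (p := p) 3 (show n < p by omega)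
  have hB := bernoulli_mem_pIntegers (p := p) (n := p - 3) (by omega)
  have h3 := inv_natCast_mem_pIntegers_of_lt (p := p) (k := 3) (by omega) hp3
  simp only [sum_neg_distrib, ← mul_sum, show p - 3 - 1 = p - 4 by omega] at hc hd
  rw [show p - 3 = p - 4 + 1 by omega, pow_succ (2 : ℚ)] at hd
  rw [show p - 4 + 1 = p - 3 by omega] at hd
  rw [hq, show p - 1 = p - 4 + 3 by omega, pow_add] at hw
  rw [Nat.cast_sub hp3.le] at hc hd
  push_cast at he hc hd hf hw h3
  generalize (2 : ℚ) ^ (p - 4) = w at *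
  generalize (∑ k ∈ range (2 * n), ((k : ℚ) + 1) ^ (p - 3)) = S at *
  generalize (∑ k ∈ range n, ((k : ℚ) + 1) ^ (p - 3)) = A at *
  generalize (∑ k ∈ range n, ((k : ℚ) + 1) ^ (p - 4)) = C at *
  generalize bernoulli (p - 3) = B at *
  generalize harmonicPow 3 n = T at *
  lift B to pIntegers p using hB
  lift T to pIntegers p using hT
  refine ratCongr_iff.2 ⟨⟨_, h3⟩ * (2 * q * B + (2 * p * q - 6) * e + (1 + p * q) * T - 3 * q * T +
    (1 + p * q) * (p - 3) * f - 2 * ((1 + p * q) * c - 4 * d)), mul_left_cancel₀ h0 ?_⟩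
  push_cast
  linear_combination (-1 / 3 : ℚ) * (8 * (2 * w * hc - hd)
    - (2 * S + p * (p - 3) * C - 2 * c * p ^ 2) * hw
    - (2 * (1 + p * q) - 8) * he - (1 + p * q) * p * (p - 3) * hf)

lemma harmonicPow_two_congr_three (hpn : p = 2 * n + 1) (hp3 : 3 < p) :
    ratCongr p 2 (harmonicPow 2 n) (-7 / 6 * p * harmonicPow 3 n) := by
  obtain ⟨hc, hd⟩ := sum_congr_half hpn (g := fun a => (a : ℚ)⁻¹ ^ 2)
    (d := fun a => 2 * (a : ℚ)⁻¹ ^ 3) (u := 1 / 4) (v := 1 / 8)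
    (fun a ha0 ha => inv_sq_sub_congr ha0 ha)
    (fun a => by push_cast; rw [mul_inv]; ring)
    (fun a => by push_cast; rw [mul_inv]; ring)
  obtain ⟨c, hc⟩ := ratCongr_iff.1 hc
  obtain ⟨d, hd⟩ := ratCongr_iff.1 hd
  have h3 := inv_natCast_mem_pIntegers_of_lt (p := p) (k := 3) (by omega) hp3
  refine ratCongr_iff.2 ⟨2 * ⟨_, h3⟩ * (d - c), ?_⟩
  simp only [← mul_sum] at hc hd
  simp only [harmonicPow]
  push_cast at hc hd ⊢
  linear_combination 2 / 3 * (hd - hc)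

/-- `H^{(2)}_{(p-1)/2} ≡ (7/3) p B_{p-3}` modulo `p²`. -/
lemma harmonicPow_two_congr (hpn : p = 2 * n + 1) (hp3 : 3 < p) :
    ratCongr p 2 (harmonicPow 2 n) (7 / 3 * p * bernoulli (p - 3)) := by
  obtain ⟨c, hc⟩ := ratCongr_iff.1 (harmonicPow_two_congr_three hpn hp3)
  obtain ⟨d, hd⟩ := ratCongr_iff.1 (harmonicPow_three_congr hpn hp3)
  have h2 := inv_natCast_mem_pIntegers_of_lt (p := p) (k := 2) (by omega) (by omega)
  have h3 := inv_natCast_mem_pIntegers_of_lt (p := p) (k := 3) (by omega) hp3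
  refine ratCongr_iff.2 ⟨c - 7 * ⟨_, h2⟩ * ⟨_, h3⟩ * d, ?_⟩
  push_cast
  linear_combination hc - 7 / 6 * p * hd

end HarmonicCongruences

section HalfHarmonic

lemma two_mul_prod_one_sub {ι R : Type*} [CommRing R] (A : Subring R) (s : Finset ι) {t : R}
    {x : ι → R} (ht : t ∈ A) (hx : ∀ i ∈ s, x i ∈ A) :
    ∃ c : A, 2 * ∏ i ∈ s, (1 - t * x i) =
      2 - 2 * t * ∑ i ∈ s, x i + t ^ 2 * ((∑ i ∈ s, x i) ^ 2 - ∑ i ∈ s, x i ^ 2) + t ^ 3 * c := by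
  classical
  induction s using Finset.induction_on with
  | empty => exact ⟨0, by simp⟩
  | insert i s hi ih =>
    have hs : ∀ j ∈ s, x j ∈ A := fun j hj => hx j (mem_insert_of_mem hj)
    obtain ⟨c, hc⟩ := ih hs
    have hy := hx i (mem_insert_self i s)
    have hE := sum_mem hs
    have hF := sum_mem fun j hj => pow_mem (hs j hj) 2
    refine ⟨c - ⟨_, hy⟩ * (⟨_, hE⟩ ^ 2 - ⟨_, hF⟩) - ⟨_, ht⟩ * ⟨_, hy⟩ * c, ?_⟩
    rw [prod_insert hi, sum_insert hi, sum_insert hi]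
    push_cast
    linear_combination (1 - t * x i) * hc

lemma prod_range_add_eq_two_pow_mul (n : ℕ) :
    ∏ i ∈ range n, (n + 1 + i) = 2 ^ n * ∏ i ∈ range n, (2 * i + 1) := by
  induction n with
  | zero => simp
  | succ n ih =>
    have h : (∏ i ∈ range (n + 1), (n + 1 + (i + 1))) * (n + 1 + 0) =
        ∏ i ∈ range (n + 2), (n + 1 + i) := (prod_range_succ' (fun i => n + 1 + i) (n + 1)).symm
    refine Nat.eq_of_mul_eq_mul_right (show 0 < n + 1 by omega) ?_
    calc (∏ i ∈ range (n + 1), (n + 1 + 1 + i)) * (n + 1)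
        = (∏ i ∈ range (n + 1), (n + 1 + (i + 1))) * (n + 1 + 0) := by
          congr 1
          exact prod_congr rfl fun i _ => by ring
      _ = _ := by
          rw [h, prod_range_succ, prod_range_succ, ih, prod_range_succ]
          ring

lemma prod_one_sub_eq_two_pow_mul {p n : ℕ} (hpn : p = 2 * n + 1) :
    ∏ j ∈ range n, (1 - (p : ℚ) * ((j + 1 : ℕ) : ℚ)⁻¹) =
      2 ^ (p - 1) * ∏ j ∈ range n, (1 - (p : ℚ) * (2⁻¹ * ((j + 1 : ℕ) : ℚ)⁻¹)) := by
  have hpQ : (p : ℚ) = 2 * n + 1 := by exact_mod_cast hpn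
  have h0 : (∏ j ∈ range n, -(((j + 1 : ℕ) : ℚ))) ≠ 0 :=
    prod_ne_zero_iff.2 fun j _ => by push_cast; exact neg_ne_zero.2 (by positivity)
  refine mul_right_cancel₀ h0 ?_
  have key : ∏ i ∈ range n, ((n : ℚ) + 1 + i) = 2 ^ n * ∏ i ∈ range n, (2 * (i : ℚ) + 1) := by
    exact_mod_cast prod_range_add_eq_two_pow_mul n
  have hL : ∏ j ∈ range n, (1 - (p : ℚ) * ((j + 1 : ℕ) : ℚ)⁻¹) * -(((j + 1 : ℕ) : ℚ)) =
      ∏ i ∈ range n, ((n : ℚ) + 1 + i) := by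
    rw [← prod_range_reflect (fun i : ℕ => (n : ℚ) + 1 + i)]
    refine prod_congr rfl fun j hj => ?_
    have hj := mem_range.1 hj
    have hj1 : ((j : ℚ) + 1) ≠ 0 := by positivity
    rw [show n - 1 - j = n - (j + 1) by omega, Nat.cast_sub hj, hpQ]
    push_cast
    field_simp
    ring
  have hR : ∏ j ∈ range n, 2 * (1 - (p : ℚ) * (2⁻¹ * ((j + 1 : ℕ) : ℚ)⁻¹)) * -(((j + 1 : ℕ) : ℚ)) =
      ∏ i ∈ range n, (2 * (i : ℚ) + 1) := by
    rw [← prod_range_reflect (fun i : ℕ => 2 * (i : ℚ) + 1)]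
    refine prod_congr rfl fun j hj => ?_
    have hj := mem_range.1 hj
    have hj1 : ((j : ℚ) + 1) ≠ 0 := by positivity
    rw [show n - 1 - j = n - (j + 1) by omega, Nat.cast_sub hj, hpQ]
    push_cast
    field_simp
    ring
  rw [← prod_mul_distrib, hL, key, ← hR, prod_mul_distrib, prod_mul_distrib, prod_const,
    card_range, show p - 1 = n + n by omega, pow_add]
  ring

/-- `H_{(p-1)/2} ≡ -2 q_p(2) + p q_p(2)²` modulo `p²`. -/
lemma harmonic_congr {p n : ℕ} [Fact p.Prime] (hpn : p = 2 * n + 1) (hp3 : 3 < p) :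
    ratCongr p 2 (harmonic n) (-2 * fermatQ p + p * fermatQ p ^ 2) := by
  have h0 : (p : ℚ) ≠ 0 := by positivity
  have hi2 := inv_natCast_mem_pIntegers_of_lt (p := p) (k := 2) (by omega) (by omega)
  have hi3 := inv_natCast_mem_pIntegers_of_lt (p := p) (k := 3) (by omega) hp3
  push_cast at hi2 hi3
  have hp : (p : ℚ) ∈ pIntegers p := natCast_mem _ _
  have hx : ∀ j ∈ range n, ((j + 1 : ℕ) : ℚ)⁻¹ ∈ pIntegers p := fun j hj =>
    inv_natCast_mem_pIntegers_of_lt j.succ_pos (by have := mem_range.1 hj; omega)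
  obtain ⟨c, hc⟩ := two_mul_prod_one_sub (pIntegers p) (range n) hp hx
  obtain ⟨d, hd⟩ := two_mul_prod_one_sub (pIntegers p) (range n) hp
    (fun j hj => mul_mem hi2 (hx j hj))
  obtain ⟨q, hq⟩ := exists_fermatQ (p := p) (by omega)
  obtain ⟨f, hf⟩ := ratCongr_iff.1 (harmonicPow_two_congr hpn hp3)
  have hprod := prod_one_sub_eq_two_pow_mul hpn
  have hB := bernoulli_mem_pIntegers (p := p) (n := p - 3) (by omega)
  have hH := harmonic_mem_pIntegers (p := p) (show n < p by omega)
  simp only [mul_pow, ← mul_sum] at hd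
  rw [← harmonicPow, ← harmonic] at hc hd
  rw [two_pow_eq_fermatQ, hq] at hprod
  rw [hq]
  generalize harmonic n = H at *
  generalize harmonicPow 2 n = F at *
  generalize bernoulli (p - 3) = B at *
  generalize (∏ j ∈ range n, (1 - (p : ℚ) * ((j + 1 : ℕ) : ℚ)⁻¹)) = P₁ at *
  generalize (∏ j ∈ range n, (1 - (p : ℚ) * (2⁻¹ * ((j + 1 : ℕ) : ℚ)⁻¹))) = P₂ at *
  lift H to pIntegers p using hH
  lift B to pIntegers p using hB
  obtain ⟨i2, hi2⟩ : ∃ i : pIntegers p, (i : ℚ) = 2⁻¹ := ⟨⟨_, hi2⟩, rfl⟩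
  obtain ⟨i3, hi3⟩ : ∃ i : pIntegers p, (i : ℚ) = 3⁻¹ := ⟨⟨_, hi3⟩, rfl⟩
  obtain ⟨g, hg⟩ : ∃ g : pIntegers p, F = p * g :=
    ⟨7 * i3 * B + f * p, by push_cast; rw [hi3]; linear_combination hf⟩
  subst hg
  obtain ⟨k, hk⟩ : ∃ k : pIntegers p, (k : ℚ) = c - d - q * (H ^ 2 - p * g) / 4 - p * q * d :=
    ⟨c - d - q * (H ^ 2 - p * g) * i2 ^ 2 - p * q * d, by push_cast; rw [hi2]; ring⟩
  obtain ⟨e, he⟩ : ∃ e : pIntegers p,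
      (e : ℚ) = 3 / 4 * (H ^ 2 - p * g) + q * H + p * k :=
    ⟨3 * i2 ^ 2 * (H ^ 2 - p * g) + q * H + p * k, by push_cast; rw [hi2]; ring⟩
  have hHe : (H : ℚ) = -2 * q + p * e := by
    refine mul_left_cancel₀ h0 ?_
    rw [he, hk]
    linear_combination hc - (1 + p * q) * hd - 2 * hprod
  refine ratCongr_iff.2
    ⟨-2 * q * e + 3 * i2 ^ 2 * p * e ^ 2 - 3 * i2 ^ 2 * g + k, ?_⟩
  push_cast
  rw [hi2]
  linear_combination hHe + p * he + (p * 3 / 4 * (H - 2 * q + p * e) + p * q) * hHe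

end HalfHarmonic

section Convolution

lemma sum_harmonic_div (n : ℕ) :
    ∑ j ∈ range n, harmonic (j + 1) * ((j + 1 : ℕ) : ℚ)⁻¹ =
      (harmonic n ^ 2 + harmonicPow 2 n) / 2 := by
  induction n with
  | zero => simp [harmonicPow]
  | succ n ih =>
    rw [sum_range_succ, ih, harmonicPow, harmonicPow, sum_range_succ, harmonic_succ]
    ring

lemma sum_inv_mul_inv_reflect (n : ℕ) :
    ∑ j ∈ range n, ((j + 1 : ℕ) : ℚ)⁻¹ * ((n - j : ℕ) : ℚ)⁻¹ =
      2 * harmonic n * ((n + 1 : ℕ) : ℚ)⁻¹ := by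
  have hrefl : ∑ j ∈ range n, ((n - j : ℕ) : ℚ)⁻¹ = harmonic n := by
    rw [harmonic, ← sum_range_reflect]
    refine sum_congr rfl fun j hj => ?_
    have := mem_range.1 hj
    rw [show n - (n - 1 - j) = j + 1 by omega]
  have hsplit : ∀ j ∈ range n, ((j + 1 : ℕ) : ℚ)⁻¹ * ((n - j : ℕ) : ℚ)⁻¹ =
      (((j + 1 : ℕ) : ℚ)⁻¹ + ((n - j : ℕ) : ℚ)⁻¹) * ((n + 1 : ℕ) : ℚ)⁻¹ := by
    intro j hj
    have hj := mem_range.1 hj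
    have h1 : ((j + 1 : ℕ) : ℚ) ≠ 0 := by positivity
    have h2 : ((n - j : ℕ) : ℚ) ≠ 0 := Nat.cast_ne_zero.2 (by omega)
    have h3 : ((n + 1 : ℕ) : ℚ) = (j + 1 : ℕ) + (n - j : ℕ) := by
      rw [← Nat.cast_add]
      congr 1
      omega
    have h4 : ((n + 1 : ℕ) : ℚ) ≠ 0 := by positivity
    rw [h3] at h4 ⊢
    field_simp
    ring
  rw [sum_congr rfl hsplit, ← sum_mul, sum_add_distrib, hrefl, ← harmonic]
  ring

/-- The convolution `∑_{k=1}^n H_k / (n+1-k)`. -/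
lemma sum_harmonic_div_reflect (n : ℕ) :
    ∑ j ∈ range n, harmonic (j + 1) * ((n - j : ℕ) : ℚ)⁻¹ =
      harmonic (n + 1) ^ 2 - harmonicPow 2 (n + 1) := by
  induction n with
  | zero => simp [harmonicPow, harmonic]
  | succ n ih =>
    have hstep : ∑ j ∈ range (n + 1), harmonic (j + 1) * ((n + 1 - j : ℕ) : ℚ)⁻¹ =
        ∑ j ∈ range (n + 1), harmonic j * ((n + 1 - j : ℕ) : ℚ)⁻¹ +
          ∑ j ∈ range (n + 1), ((j + 1 : ℕ) : ℚ)⁻¹ * ((n + 1 - j : ℕ) : ℚ)⁻¹ := by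
      rw [← sum_add_distrib]
      exact sum_congr rfl fun j _ => by rw [harmonic_succ]; ring
    have hshift : ∑ j ∈ range (n + 1), harmonic j * ((n + 1 - j : ℕ) : ℚ)⁻¹ =
        ∑ j ∈ range n, harmonic (j + 1) * ((n - j : ℕ) : ℚ)⁻¹ := by
      rw [sum_range_succ']
      simp
    rw [hstep, hshift, ih, sum_inv_mul_inv_reflect, harmonic_succ (n + 1), harmonicPow,
      harmonicPow, sum_range_succ _ (n + 1)]
    ring

end Convolution

lemma sum_harmonic_div_add_congr {p n : ℕ} [Fact p.Prime] (hpn : p = 2 * n + 1) :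
    ratCongr p 1 (∑ j ∈ range n, harmonic (j + 1) * ((p + 2 * (j + 1) : ℕ) : ℚ)⁻¹)
      ((harmonic n ^ 2 + harmonicPow 2 n) / 4) := by
  have hexact : (harmonic n ^ 2 + harmonicPow 2 n) / 4 =
      ∑ j ∈ range n, harmonic (j + 1) * ((2 * (j + 1) : ℕ) : ℚ)⁻¹ := by
    rw [show (harmonic n ^ 2 + harmonicPow 2 n) / 4 =
      2⁻¹ * ((harmonic n ^ 2 + harmonicPow 2 n) / 2) by ring, ← sum_harmonic_div, mul_sum]
    refine sum_congr rfl fun j _ => ?_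
    push_cast
    rw [mul_inv]
    ring
  rw [hexact]
  refine ratCongr_sum fun j hj => ratCongr_iff.2 ?_
  have hj := mem_range.1 hj
  have hnd : ¬ p ∣ 2 * (j + 1) := fun h => absurd (Nat.le_of_dvd (by omega) h) (by omega)
  have hx := inv_natCast_mem_pIntegers hnd
  have hy := inv_natCast_mem_pIntegers (p := p) (k := p + 2 * (j + 1))
    fun h => hnd ((Nat.dvd_add_right (dvd_refl p)).1 h)
  have hH := harmonic_mem_pIntegers (p := p) (show j + 1 < p by omega)
  refine ⟨-⟨_, hH⟩ * ⟨_, hx⟩ * ⟨_, hy⟩, ?_⟩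
  push_cast
  field_simp
  ring

/-- The partial fraction decomposition of the summands. -/
lemma sum_eq_partial_fractions {p n : ℕ} (hpn : p = 2 * n + 1) :
    ∑ k ∈ Icc 1 ((p - 1) / 2),
        ((p : ℚ) / 2 - k) * harmonic k / (((p : ℚ) + 1 - 2 * k) * ((p : ℚ) + 2 * k)) =
      ((2 * p + 1 : ℕ) : ℚ)⁻¹ *
        (p * ∑ j ∈ range n, harmonic (j + 1) * ((p + 2 * (j + 1) : ℕ) : ℚ)⁻¹ -
          (∑ j ∈ range n, harmonic (j + 1) * ((n - j : ℕ) : ℚ)⁻¹) / 4) := by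
  have hIcc : Icc 1 ((p - 1) / 2) = Ico 1 (n + 1) := by
    ext k
    simp only [mem_Icc, mem_Ico]
    omega
  rw [hIcc, sum_Ico_eq_sum_range, Nat.add_sub_cancel, mul_sum, sum_div, ← sum_sub_distrib,
    mul_sum]
  refine sum_congr rfl fun j hj => ?_
  have hj := mem_range.1 hj
  have hpQ : (p : ℚ) = 2 * n + 1 := by exact_mod_cast hpn
  have hA : (n : ℚ) - j ≠ 0 := sub_ne_zero.2 (Nat.cast_injective.ne hj.ne')
  have hA2 : (p : ℚ) + 1 - 2 * (1 + j) ≠ 0 := by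
    rw [hpQ]
    intro h
    exact hA (by linarith)
  rw [add_comm 1 j, Nat.cast_sub hj.le]
  push_cast
  rw [add_comm (1 : ℚ) j] at hA2
  have hB : (p : ℚ) + 2 * (j + 1) ≠ 0 := by positivity
  have hC : 2 * (p : ℚ) + 1 ≠ 0 := by positivity
  rw [show (n : ℚ) - j = (p + 1 - 2 * (j + 1)) / 2 by rw [hpQ]; ring]
  field_simp
  ring

theorem sum_Hk_congr (p : ℕ) (hp : p.Prime) (hp3 : 3 < p) :
    ratCongr p 2
      (∑ k ∈ Finset.Icc 1 ((p - 1) / 2),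
        ((p : ℚ) / 2 - k) * harmonic k / (((p : ℚ) + 1 - 2 * k) * ((p : ℚ) + 2 * k)))
      (2 * fermatQ p - fermatQ p ^ 2 - 6 * p * fermatQ p + 2 * p * fermatQ p ^ 2 +
        p * fermatQ p ^ 3 + (7 / 12) * p * bernoulli (p - 3)) := by
  have : Fact p.Prime := ⟨hp⟩
  obtain ⟨n, hpn⟩ := hp.odd_of_ne_two (by omega)
  have hi2 := inv_natCast_mem_pIntegers_of_lt (p := p) (k := 2) (by omega) (by omega)
  have hi3 := inv_natCast_mem_pIntegers_of_lt (p := p) (k := 3) (by omega) hp3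
  have hs := inv_natCast_mem_pIntegers (p := p) (k := 2 * p + 1)
    fun h => hp.one_lt.ne' (Nat.dvd_one.1 ((Nat.dvd_add_right (Dvd.intro_left 2 rfl)).1 h))
  have hr := inv_natCast_mem_pIntegers (p := p) (k := p + 1)
    fun h => hp.one_lt.ne' (Nat.dvd_one.1 ((Nat.dvd_add_right (dvd_refl p)).1 h))
  have hs1 : ((2 * p + 1 : ℕ) : ℚ)⁻¹ * (2 * p + 1) = 1 := by
    push_cast
    exact inv_mul_cancel₀ (by positivity)
  have hr1 : ((p + 1 : ℕ) : ℚ)⁻¹ * (p + 1) = 1 := by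
    push_cast
    exact inv_mul_cancel₀ (by positivity)
  have hn1 : ((n + 1 : ℕ) : ℚ)⁻¹ = 2 * ((p + 1 : ℕ) : ℚ)⁻¹ := by
    rw [hpn]
    push_cast
    field_simp
    ring
  have hV : harmonic (n + 1) ^ 2 - harmonicPow 2 (n + 1) =
      harmonic n ^ 2 + 4 * harmonic n * ((p + 1 : ℕ) : ℚ)⁻¹ - harmonicPow 2 n := by
    rw [harmonic_succ, harmonicPow, harmonicPow, sum_range_succ, hn1]
    ring
  rw [sum_eq_partial_fractions hpn, sum_harmonic_div_reflect, hV]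
  obtain ⟨u, hu⟩ := ratCongr_iff.1 (sum_harmonic_div_add_congr hpn)
  obtain ⟨w, hw⟩ := ratCongr_iff.1 (harmonic_congr hpn hp3)
  obtain ⟨f, hf⟩ := ratCongr_iff.1 (harmonicPow_two_congr hpn hp3)
  obtain ⟨q, hq⟩ := exists_fermatQ (p := p) (by omega)
  have hB := bernoulli_mem_pIntegers (p := p) (n := p - 3) (by omega)
  have hH := harmonic_mem_pIntegers (p := p) (show n < p by omega)
  rw [hq] at hw ⊢
  generalize (∑ j ∈ range n, harmonic (j + 1) * ((p + 2 * (j + 1) : ℕ) : ℚ)⁻¹) = U at *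
  generalize harmonic n = H at *
  generalize harmonicPow 2 n = F at *
  generalize bernoulli (p - 3) = B at *
  generalize ((2 * p + 1 : ℕ) : ℚ)⁻¹ = s at *
  generalize ((p + 1 : ℕ) : ℚ)⁻¹ = r at *
  lift H to pIntegers p using hH
  lift B to pIntegers p using hB
  lift s to pIntegers p using hs
  lift r to pIntegers p using hr
  obtain ⟨i2, hi2⟩ : ∃ i : pIntegers p, (i : ℚ) = 2⁻¹ := ⟨⟨_, hi2⟩, by push_cast; rfl⟩
  obtain ⟨i3, hi3⟩ : ∃ i : pIntegers p, (i : ℚ) = 3⁻¹ := ⟨⟨_, hi3⟩, by push_cast; rfl⟩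
  obtain ⟨h, hh⟩ : ∃ h : pIntegers p, (H : ℚ) ^ 2 = 4 * q ^ 2 - 4 * p * q ^ 3 + h * p ^ 2 := by
    refine ⟨-4 * q * w + (q ^ 2 + p * w) ^ 2, ?_⟩
    push_cast
    linear_combination (H + (-2 * q + p * q ^ 2 + p ^ 2 * w)) * hw
  obtain ⟨x, hx⟩ : ∃ x : pIntegers p, p * U - (H ^ 2 + 4 * H * r - F) / 4 =
      2 * q - q ^ 2 + p * (q ^ 3 - 2 * q + 7 / 12 * B) + x * p ^ 2 := by
    refine ⟨-q ^ 3 + p * h * i2 ^ 2 + (7 * i3 * B + p * f) * i2 ^ 2 + u - h * i2 ^ 2 + q ^ 2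
      - w * (1 - p) - r * H + f * i2 ^ 2, ?_⟩
    push_cast
    rw [hi2, hi3]
    linear_combination p * hu + (p / 4 - 1 / 4) * hh + (p / 4 + 1 / 4) * hf
      - (1 - p) * hw - H * (1 - p) * hr1
  refine ratCongr_iff.2 ⟨x - 2 * (q ^ 3 - 2 * q + 7 * i3 * i2 ^ 2 * B + p * x)
    + 4 * s * (2 * q - q ^ 2 + p * (q ^ 3 - 2 * q + 7 * i3 * i2 ^ 2 * B + p * x)), ?_⟩
  rw [hx]
  push_cast
  rw [hi2, hi3]
  linear_combination (1 - 2 * p) *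
    (2 * q - q ^ 2 + p * (q ^ 3 - 2 * q + 7 / 12 * B) + x * p ^ 2) * hs1
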